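/- For x ≥ 2, ∑_{p ≤ √x} p/(log p) = 2x/(log x)² + O(x/(log x)³), where the sum is over primes and the implicit constant is absolute. -/

import Mathlib

open scoped Classical

open Complex in
/-- summand of the continued series -/
noncomputable def PGt (n : ℕ) (s : ℂ) : ℂ :=
  (s - 1) * (((n + 1 : ℝ) : ℝ) : ℂ) ^ (-s) + (((n + 2 : ℝ) : ℝ) : ℂ) ^ (1 - s)
    - (((n + 1 : ℝ) : ℝ) : ℂ) ^ (1 - s)

lemma P_cpow_deriv (x : ℝ) (hx : 0 < x) (r : ℂ) :
    HasDerivAt (fun y : ℝ => (y : ℂ) ^ r) (r * (x : ℂ) ^ (r - 1)) x := by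
  by_cases hr : r = 0
  · subst hr; simpa using hasDerivAt_const x (1 : ℂ)
  · exact hasDerivAt_ofReal_cpow_const hx.ne' hr

lemma P_diff_bound (s : ℂ) (hs : 0 ≤ s.re) (a u : ℝ) (ha : 1 ≤ a) (hu : a ≤ u) (hu' : u ≤ a + 1)
    (e : ℝ) (he : 0 ≤ e) (he1 : e ≤ 1) :
    ‖(a : ℂ) ^ (-s) - (u : ℂ) ^ (-s)‖ ≤ 2 * ‖s‖ ^ e * a ^ (-s.re - e) := by
  have ha0 : 0 < a := by linarith
  have hu0 : 0 < u := by linarith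
  have h1 : ‖(a : ℂ) ^ (-s) - (u : ℂ) ^ (-s)‖ ≤ 2 * a ^ (-s.re) := by
    refine (norm_sub_le _ _).trans ?_
    rw [Complex.norm_cpow_eq_rpow_re_of_pos ha0, Complex.norm_cpow_eq_rpow_re_of_pos hu0]
    simp only [Complex.neg_re]
    have : u ^ (-s.re) ≤ a ^ (-s.re) :=
      Real.rpow_le_rpow_of_nonpos ha0 hu (by linarith)
    linarith
  have h2 : ‖(a : ℂ) ^ (-s) - (u : ℂ) ^ (-s)‖ ≤ ‖s‖ * a ^ (-s.re - 1) := by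
    have := norm_image_sub_le_of_norm_deriv_le_segment' (a := a) (b := a + 1)
      (f := fun y : ℝ => (y : ℂ) ^ (-s)) (f' := fun y => (-s) * (y : ℂ) ^ (-s - 1))
      (C := ‖s‖ * a ^ (-s.re - 1)) (fun x hx =>
        (P_cpow_deriv x (by linarith [hx.1]) (-s)).hasDerivWithinAt) (fun x hx => ?_) u ⟨hu, hu'⟩
    · rw [norm_sub_rev]
      refine this.trans ?_
      have h3 : 0 ≤ ‖s‖ * a ^ (-s.re - 1) := by positivity
      nlinarith
    · have hx0 : 0 < x := by linarith [hx.1]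
      rw [norm_mul, norm_neg, Complex.norm_cpow_eq_rpow_re_of_pos hx0]
      simp only [Complex.sub_re, Complex.neg_re, Complex.one_re]
      gcongr ‖s‖ * ?_
      exact Real.rpow_le_rpow_of_nonpos ha0 hx.1 (by linarith)
  have h4 : a ^ (-s.re - e) = a ^ (-s.re) * (a ^ e)⁻¹ := by
    rw [sub_eq_add_neg, Real.rpow_add ha0, Real.rpow_neg ha0.le e]
  have h5 : a ^ (-s.re - 1) = a ^ (-s.re) * a⁻¹ := by
    rw [sub_eq_add_neg, Real.rpow_add ha0, Real.rpow_neg_one]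
  have h6 : ‖s‖ ^ e * (a ^ e)⁻¹ = (‖s‖ / a) ^ e := by
    rw [Real.div_rpow (norm_nonneg _) ha0.le]; rfl
  have h7 : 2 * ‖s‖ ^ e * a ^ (-s.re - e) = 2 * a ^ (-s.re) * (‖s‖ / a) ^ e := by
    rw [h4, ← h6]; ring
  rw [h7]
  have h8 : 0 < a ^ (-s.re) := by positivity
  rcases le_total ‖s‖ a with h | h
  · have h9 : ‖s‖ / a ≤ 1 := by rw [div_le_one ha0]; exact h
    have h10 : ‖s‖ / a ≤ (‖s‖ / a) ^ e := by
      rcases (by positivity : 0 ≤ ‖s‖ / a).eq_or_lt with h0 | h0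
      · rw [← h0]; positivity
      · simpa using Real.rpow_le_rpow_of_exponent_ge h0 h9 he1
    have h11 : 0 ≤ ‖s‖ / a := by positivity
    calc _ ≤ _ := h2
      _ = a ^ (-s.re) * (‖s‖ / a) := by rw [h5]; ring
      _ ≤ a ^ (-s.re) * (‖s‖ / a) ^ e := by gcongr
      _ ≤ _ := by nlinarith [mul_nonneg h8.le (h11.trans h10)]
  · have h9 : 1 ≤ ‖s‖ / a := by rw [one_le_div ha0]; exact h
    have h10 : 1 ≤ (‖s‖ / a) ^ e := Real.one_le_rpow h9 he
    nlinarith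

lemma P_G_bound (n : ℕ) (s : ℂ) (hs : 0 ≤ s.re) (e : ℝ) (he : 0 ≤ e) (he1 : e ≤ 1) :
    ‖PGt n s‖ ≤ ‖s - 1‖ * (2 * ‖s‖ ^ e * (n + 1 : ℝ) ^ (-s.re - e)) := by
  have hn : (1 : ℝ) ≤ (n + 1 : ℝ) := by simp
  have := norm_image_sub_le_of_norm_deriv_le_segment' (a := (n + 1 : ℝ)) (b := (n + 1 : ℝ) + 1)
      (f := fun y : ℝ => (s - 1) * (((n + 1 : ℝ) : ℝ) : ℂ) ^ (-s) * (y : ℂ) + (y : ℂ) ^ (1 - s))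
      (f' := fun y => (s - 1) * (((n + 1 : ℝ) : ℝ) : ℂ) ^ (-s) * 1
        + (1 - s) * (y : ℂ) ^ (1 - s - 1))
      (C := ‖s - 1‖ * (2 * ‖s‖ ^ e * (n + 1 : ℝ) ^ (-s.re - e))) (fun x hx =>
        ((((hasDerivAt_id x).ofReal_comp).const_mul _).add
        (P_cpow_deriv x (by linarith [hx.1]) (1 - s))).hasDerivWithinAt) (fun x hx => ?_)
        ((n + 1 : ℝ) + 1) ⟨by linarith, le_rfl⟩
  · rw [show ((n + 1 : ℝ) + 1 - (n + 1)) = 1 by ring, mul_one] at this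
    convert! this using 2
    unfold PGt
    rw [show ((n : ℝ) + 1 + 1) = n + 2 by ring]
    push_cast
    ring
  · have : (s - 1) * (((n + 1 : ℝ) : ℝ) : ℂ) ^ (-s) * 1
        + (1 - s) * (x : ℂ) ^ (1 - s - 1) =
        (s - 1) * ((((n + 1 : ℝ) : ℝ) : ℂ) ^ (-s) - (x : ℂ) ^ (-s)) := by
      rw [show 1 - s - 1 = -s by ring]; ring
    rw [this, norm_mul]
    gcongr
    exact P_diff_bound s hs _ x hn hx.1 hx.2.le e he he1

lemma P_zeta_sum (s : ℂ) (hs : 1 < s.re) : HasSum (fun n => PGt n s) (riemannZeta₁ s - 1) := by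
  have hs1 : s ≠ 1 := by rintro rfl; simp at hs
  have h1 : HasSum (fun n : ℕ => (s - 1) * (((n + 1 : ℝ) : ℝ) : ℂ) ^ (-s))
      ((s - 1) * riemannZeta s) := by
    apply HasSum.mul_left
    rw [zeta_eq_tsum_one_div_nat_add_one_cpow hs]
    have : Summable (fun n : ℕ => 1 / ((n : ℂ) + 1) ^ s) := by
      have := (summable_nat_add_iff 1).mpr (Complex.summable_one_div_nat_cpow.mpr hs)
      simpa using this
    convert! this.hasSum using 2 with n
    rw [Complex.cpow_neg]; push_cast; simp
  have h2 : HasSum (fun n : ℕ => (((n + 2 : ℝ) : ℝ) : ℂ) ^ (1 - s)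
    - (((n + 1 : ℝ) : ℝ) : ℂ) ^ (1 - s)) (-1) := by
    have hsum : Summable (fun n : ℕ => (((n + 2 : ℝ) : ℝ) : ℂ) ^ (1 - s)
      - (((n + 1 : ℝ) : ℝ) : ℂ) ^ (1 - s)) := by
      have h3 : Summable (fun n : ℕ => PGt n s) := by
        refine Summable.of_norm_bounded
          (g := fun n : ℕ => ‖s - 1‖ * (2 * ‖s‖ ^ (0:ℝ) * (n + 1 : ℝ) ^ (-s.re - 0))) ?_ ?_
        · apply Summable.mul_left
          apply Summable.mul_left
          have := (summable_nat_add_iff 1).mpr (Real.summable_nat_rpow.mpr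
            (show -s.re - 0 < -1 by linarith))
          simpa using this
        · intro n; exact P_G_bound n s (by linarith) 0 le_rfl zero_le_one
      have := h3.sub h1.summable
      refine this.congr fun n => ?_
      unfold PGt; ring
    rw [hsum.hasSum_iff_tendsto_nat]
    have h4 : ∀ N : ℕ, ∑ n ∈ Finset.range N, ((((n + 2 : ℝ) : ℝ) : ℂ) ^ (1 - s)
      - (((n + 1 : ℝ) : ℝ) : ℂ) ^ (1 - s)) = (((N + 1 : ℝ) : ℝ) : ℂ) ^ (1 - s) - 1 := by
      intro N
      have := Finset.sum_range_sub (fun n : ℕ => (((n + 1 : ℝ) : ℝ) : ℂ) ^ (1 - s)) N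
      simp only [Nat.cast_add, Nat.cast_one, Nat.cast_zero, zero_add, Complex.ofReal_one,
        Complex.one_cpow] at this
      rw [← this]
      refine Finset.sum_congr rfl fun n _ => ?_
      rw [show (n : ℝ) + 1 + 1 = n + 2 by ring]
    simp_rw [h4]
    rw [show (-1 : ℂ) = 0 - 1 by ring]
    refine Filter.Tendsto.sub_const ?_ _
    rw [tendsto_zero_iff_norm_tendsto_zero]
    have h5 : ∀ N : ℕ, ‖(((N + 1 : ℝ) : ℝ) : ℂ) ^ (1 - s)‖ = ((N : ℝ) + 1) ^ (-(s.re - 1)) := by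
      intro N
      rw [Complex.norm_cpow_eq_rpow_re_of_pos (by positivity)]
      simp
    simp_rw [h5]
    have h6 := tendsto_rpow_neg_atTop (y := s.re - 1) (by linarith)
    exact h6.comp (Filter.tendsto_atTop_add_const_right _ _ tendsto_natCast_atTop_atTop)
  have h7 : riemannZeta₁ s = (s - 1) * riemannZeta s := by
    rw [riemannZeta_eq_inv_sub_mul hs1, ← mul_assoc, mul_inv_cancel₀ (sub_ne_zero.mpr hs1), one_mul]
  rw [h7]
  have h8 := h1.add h2
  rw [← sub_eq_add_neg] at h8
  convert! h8 using 2 with n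
  unfold PGt; ring

lemma P_G_diff (n : ℕ) : Differentiable ℂ (PGt n) := by
  have h1 : (((n + 1 : ℝ) : ℝ) : ℂ) ≠ 0 := by
    exact_mod_cast (by positivity : (n + 1 : ℝ) ≠ 0)
  have h2 : (((n + 2 : ℝ) : ℝ) : ℂ) ≠ 0 := by
    exact_mod_cast (by positivity : (n + 2 : ℝ) ≠ 0)
  intro s
  unfold PGt
  refine DifferentiableAt.sub (DifferentiableAt.add (DifferentiableAt.mul (by fun_prop) ?_) ?_) ?_
  · exact DifferentiableAt.const_cpow (by fun_prop) (Or.inl h1)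
  · exact DifferentiableAt.const_cpow (by fun_prop) (Or.inl h2)
  · exact DifferentiableAt.const_cpow (by fun_prop) (Or.inl h1)

lemma P_zeta_cont (s : ℂ) (hs : 1 - 1/120 < s.re) :
    riemannZeta₁ s = 1 + ∑' n, PGt n s := by
  set R : ℝ := ‖s‖ + 3
  let U : Set ℂ := {z | 1 - 1/120 < z.re} ∩ Metric.ball 0 R
  have hUo : IsOpen U := (isOpen_lt continuous_const Complex.continuous_re).inter Metric.isOpen_ball
  have hUc : IsPreconnected U :=
    ((convex_halfSpace_re_gt _).inter (convex_ball 0 R)).isPreconnected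
  have hsu : Summable (fun n : ℕ => (R + 1) * (2 * R ^ (1/60:ℝ) * (n + 1 : ℝ) ^ (-(121/120) : ℝ))) := by
    apply Summable.mul_left
    apply Summable.mul_left
    have := (summable_nat_add_iff 1).mpr (Real.summable_nat_rpow.mpr
            (show (-(121/120):ℝ) < -1 by norm_num))
    simpa using this
  have hd : DifferentiableOn ℂ (fun z => ∑' n, PGt n z) U := by
    refine Complex.differentiableOn_tsum_of_summable_norm hsu
      (fun n => (P_G_diff n).differentiableOn) hUo ?_
    intro n z hz
    have hz1 : 1 - 1/120 < z.re := hz.1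
    have hz2 : ‖z‖ < R := by simpa using hz.2
    refine (P_G_bound n z (by linarith) (1/60) (by norm_num) (by norm_num)).trans ?_
    gcongr
    · refine (norm_sub_le _ _).trans ?_; simp; linarith
    · linarith
    · linarith
  have h := AnalyticOnNhd.eqOn_of_preconnected_of_eventuallyEq (𝕜 := ℂ) (U := U) (z₀ := 2)
    (f := riemannZeta₁) (g := fun z => 1 + ∑' n, PGt n z)
    (differentiable_riemannZeta₁.differentiableOn.analyticOnNhd hUo)
    ((hd.const_add 1).analyticOnNhd hUo) hUc ?_ ?_
  · exact h ⟨hs, by simp [R]⟩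
  · refine ⟨by norm_num, ?_⟩
    simp only [R, Metric.mem_ball, dist_zero_right, Complex.norm_ofNat]; linarith [norm_nonneg s]
  · filter_upwards [(isOpen_lt continuous_const Complex.continuous_re).mem_nhds
      (show (1 : ℝ) < (2 : ℂ).re by norm_num)] with z hz
    rw [(P_zeta_sum z hz).tsum_eq]; ring

lemma P_upper : ∃ C : ℝ, 0 < C ∧ ∀ s : ℂ, 1 - 1/120 < s.re → s.re ≤ 4 →
    ‖riemannZeta₁ s‖ ≤ C * (1 + |s.im|) ^ (1 + 1/60 : ℝ) := by
  have hsu : Summable (fun n : ℕ => (n + 1 : ℝ) ^ (-(121/120) : ℝ)) := by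
    have := (summable_nat_add_iff 1).mpr (Real.summable_nat_rpow.mpr
            (show (-(121/120):ℝ) < -1 by norm_num))
    simpa using this
  set K := ∑' n : ℕ, (n + 1 : ℝ) ^ (-(121/120) : ℝ)
  have hK : 0 ≤ K := tsum_nonneg fun n => by positivity
  refine ⟨1 + 4 * (2 * 4 * K), by positivity, fun s h1 h2 => ?_⟩
  set τ := 1 + |s.im|
  have hτ : 1 ≤ τ := by simp [τ]
  have hn : ‖s‖ ≤ 4 * τ := by
    refine (Complex.norm_le_abs_re_add_abs_im s).trans ?_
    rw [abs_of_pos (by linarith)]; simp only [τ]; linarith [abs_nonneg s.im]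
  have hn1 : ‖s - 1‖ ≤ 4 * τ := by
    refine (Complex.norm_le_abs_re_add_abs_im (s - 1)).trans ?_
    have : |(s - 1).re| ≤ 4 := by rw [abs_le]; simp; constructor <;> linarith
    simp only [Complex.sub_im, Complex.one_im, sub_zero, τ]; linarith [abs_nonneg s.im]
  rw [P_zeta_cont s h1]
  have hsum : ‖∑' n, PGt n s‖ ≤ 4 * τ * (2 * (4 * τ ^ (1/60:ℝ)) * K) := by
    refine tsum_of_norm_bounded (HasSum.mul_left _ (HasSum.mul_left _ hsu.hasSum)) fun n => ?_
    refine (P_G_bound n s (by linarith) (1/60) (by norm_num) (by norm_num)).trans ?_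
    have : ‖s‖ ^ (1/60:ℝ) ≤ 4 * τ ^ (1/60:ℝ) := by
      calc ‖s‖ ^ (1/60:ℝ) ≤ (4 * τ) ^ (1/60:ℝ) := by gcongr
        _ = 4 ^ (1/60:ℝ) * τ ^ (1/60:ℝ) := Real.mul_rpow (by norm_num) (by linarith)
        _ ≤ 4 ^ (1:ℝ) * τ ^ (1/60:ℝ) := by gcongr <;> norm_num
        _ = _ := by rw [Real.rpow_one]
    gcongr
    · linarith
    · linarith
  have h3 : τ * τ ^ (1/60:ℝ) = τ ^ (1 + 1/60:ℝ) := by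
    rw [Real.rpow_add (by linarith), Real.rpow_one]
  have h4 : 1 ≤ τ ^ (1 + 1/60:ℝ) := Real.one_le_rpow hτ (by norm_num)
  refine (norm_add_le _ _).trans ?_
  rw [norm_one]
  calc _ ≤ 1 + 4 * τ * (2 * (4 * τ ^ (1/60:ℝ)) * K) := by gcongr
    _ = 1 + 4 * (2 * 4 * K) * (τ * τ ^ (1/60:ℝ)) := by ring
    _ ≤ _ := by rw [h3]; linarith


lemma P_cauchy : ∃ C : ℝ, 1 ≤ C ∧ ∀ s : ℂ, 1 ≤ s.re → s.re ≤ 3 → ∀ j : ℕ, j ≤ 3 →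
    ‖iteratedDeriv j riemannZeta₁ s‖ ≤ C * (1 + |s.im|) ^ (1 + 1/60 : ℝ) := by
  obtain ⟨C, hC, h⟩ := P_upper
  refine ⟨1 + 6 * (C * 4) * 240 ^ 3, by nlinarith, fun s h1 h2 j hj => ?_⟩
  set τ := 1 + |s.im|
  have hτ : 1 ≤ τ := by simp [τ]
  have key := Complex.norm_iteratedDeriv_le_of_forall_mem_sphere_norm_le (c := s) (R := 1/240)
    (C := (C * 4) * τ ^ (1 + 1/60 : ℝ)) (f := riemannZeta₁) j (by norm_num)
    differentiable_riemannZeta₁.diffContOnCl ?_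
  · refine key.trans ?_
    have h3 : (j.factorial : ℝ) ≤ 6 := by
      have := Nat.factorial_le hj
      exact_mod_cast this
    have h4 : (1 / (1/240 : ℝ) ^ j) ≤ 240 ^ 3 := by
      rw [one_div_pow, one_div_one_div]
      exact pow_le_pow_right₀ (by norm_num) hj
    have h5 : 0 ≤ (C * 4) * τ ^ (1 + 1/60 : ℝ) := by positivity
    calc _ = (j.factorial : ℝ) * ((C * 4) * τ ^ (1 + 1/60 : ℝ)) * (1 / (1/240 : ℝ) ^ j) := by
          rw [mul_one_div]
      _ ≤ 6 * ((C * 4) * τ ^ (1 + 1/60 : ℝ)) * 240 ^ 3 := by gcongr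
      _ ≤ _ := by
        have : 0 ≤ τ ^ (1 + 1/60 : ℝ) := by positivity
        nlinarith
  · intro z hz
    have hz' : ‖z - s‖ = 1/240 := by simpa [dist_eq_norm] using hz
    have hre := Complex.abs_re_le_norm (z - s)
    have him := Complex.abs_im_le_norm (z - s)
    rw [hz', abs_le] at hre him
    simp only [Complex.sub_re, Complex.sub_im] at hre him
    refine (h z (by linarith) (by linarith)).trans ?_
    have h6 : 1 + |z.im| ≤ 2 * τ := by
      have : |z.im| ≤ |s.im| + 1 := by
        have : |z.im| ≤ |z.im - s.im| + |s.im| := by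
          simpa using abs_add_le (z.im - s.im) s.im
        have : |z.im - s.im| ≤ 1 := by rw [abs_le]; constructor <;> linarith
        linarith
      simp only [τ]; linarith [abs_nonneg s.im]
    rw [mul_assoc]
    gcongr
    calc (1 + |z.im|) ^ (1 + 1/60 : ℝ) ≤ (2 * τ) ^ (1 + 1/60 : ℝ) := by gcongr
      _ = 2 ^ (1 + 1/60 : ℝ) * τ ^ (1 + 1/60 : ℝ) := Real.mul_rpow (by norm_num) (by linarith)
      _ ≤ 2 ^ (2 : ℝ) * τ ^ (1 + 1/60 : ℝ) := by gcongr <;> norm_num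
      _ = _ := by norm_num

lemma P_zeta1_eq {s : ℂ} (hs : s ≠ 1) : riemannZeta₁ s = (s - 1) * riemannZeta s := by
  rw [riemannZeta_eq_inv_sub_mul hs, ← mul_assoc, mul_inv_cancel₀ (sub_ne_zero.mpr hs), one_mul]

lemma P_zeta1_ne {s : ℂ} (hs : 1 ≤ s.re) : riemannZeta₁ s ≠ 0 := by
  by_cases h : s = 1
  · subst h; simp
  · rw [P_zeta1_eq h]
    exact mul_ne_zero (sub_ne_zero.mpr h) (riemannZeta_ne_zero_of_one_le_re hs)

lemma P_341 (x : ℝ) (hx : 0 < x) (y : ℝ) :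
    1 ≤ ‖riemannZeta (1 + x)‖ ^ 3 * ‖riemannZeta (1 + x + Complex.I * y)‖ ^ 4 *
      ‖riemannZeta (1 + x + 2 * Complex.I * y)‖ := by
  have := DirichletCharacter.norm_LFunction_product_ge_one (N := 1) 1 hx y
  simpa [DirichletCharacter.LFunctionTrivChar, DirichletCharacter.LFunction_modOne_eq] using this

/-- the 3-4-1 inequality made quantitative -/
lemma P_lower_aux : ∃ C : ℝ, 1 ≤ C ∧ ∀ x y : ℝ, 0 < x → x ≤ 1 → 1 ≤ |y| →
    x ^ 3 * (1 + |y|) ^ (4 - 1/60 : ℝ) ≤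
      64 * C ^ 4 * ‖riemannZeta₁ (1 + x + Complex.I * y)‖ ^ 4 := by
  obtain ⟨C, hC, h⟩ := P_cauchy
  refine ⟨C, hC, fun x y hx hx1 hy => ?_⟩
  set τ := 1 + |y|
  have hτ : 0 < τ := by positivity
  set m := ‖riemannZeta₁ (1 + x + Complex.I * y)‖
  have hy0 : y ≠ 0 := by rintro rfl; norm_num at hy
  have n0 : (1 + x : ℂ) ≠ 1 := by simpa using hx.ne'
  have n1 : (1 + x + Complex.I * y : ℂ) ≠ 1 := by
    intro hh; have := congrArg Complex.im hh; simp at this; exact hy0 this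
  have n2 : (1 + x + 2 * Complex.I * y : ℂ) ≠ 1 := by
    intro hh; have := congrArg Complex.im hh; simp at this; exact hy0 this
  have e0 : ‖riemannZeta (1 + x)‖ ≤ C / x := by
    have h0 := h (1 + x) (by simp; linarith) (by simp; linarith) 0 (by norm_num)
    rw [iteratedDeriv_zero, P_zeta1_eq n0, norm_mul] at h0
    have : ‖(1 + x : ℂ) - 1‖ = x := by simp [abs_of_pos hx]
    rw [this] at h0
    simp at h0
    rw [le_div_iff₀ hx]; linarith
  have e1 : ‖riemannZeta (1 + x + Complex.I * y)‖ ≤ 2 * m / τ := by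
    have : m = ‖(1 + x + Complex.I * y : ℂ) - 1‖ * ‖riemannZeta (1 + x + Complex.I * y)‖ := by
      rw [← norm_mul, ← P_zeta1_eq n1]
    have h2 : |y| ≤ ‖(1 + x + Complex.I * y : ℂ) - 1‖ := by
      simpa using Complex.abs_im_le_norm ((1 + x + Complex.I * y : ℂ) - 1)
    rw [le_div_iff₀ hτ, this]
    have h3 : τ ≤ 2 * ‖(1 + x + Complex.I * y : ℂ) - 1‖ := by simp only [τ]; linarith
    nlinarith [norm_nonneg (riemannZeta (1 + x + Complex.I * y))]
  have e2 : ‖riemannZeta (1 + x + 2 * Complex.I * y)‖ ≤ 4 * C * τ ^ (1/60 : ℝ) := by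
    have h0 := h (1 + x + 2 * Complex.I * y) (by simp; linarith) (by simp; linarith) 0 (by norm_num)
    rw [iteratedDeriv_zero, P_zeta1_eq n2, norm_mul] at h0
    have h2 : 2 * |y| ≤ ‖(1 + x + 2 * Complex.I * y : ℂ) - 1‖ := by
      simpa [abs_mul] using Complex.abs_im_le_norm ((1 + x + 2 * Complex.I * y : ℂ) - 1)
    have h3 : τ ≤ ‖(1 + x + 2 * Complex.I * y : ℂ) - 1‖ := by simp only [τ]; linarith
    have h4 : 1 + |(1 + x + 2 * Complex.I * y : ℂ).im| ≤ 2 * τ := by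
      simp [abs_mul, τ]; linarith
    have h5 : (1 + |(1 + x + 2 * Complex.I * y : ℂ).im|) ^ (1 + 1/60 : ℝ) ≤
        4 * (τ * τ ^ (1/60 : ℝ)) := by
      calc _ ≤ (2 * τ) ^ (1 + 1/60 : ℝ) := by gcongr
        _ = 2 ^ (1 + 1/60 : ℝ) * τ ^ (1 + 1/60 : ℝ) := Real.mul_rpow (by norm_num) (by linarith)
        _ ≤ 2 ^ (2 : ℝ) * τ ^ (1 + 1/60 : ℝ) := by gcongr <;> norm_num
        _ = _ := by rw [Real.rpow_add hτ, Real.rpow_one]; norm_num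
    have h6 : τ * ‖riemannZeta (1 + x + 2 * Complex.I * y)‖ ≤ C * (4 * (τ * τ ^ (1/60 : ℝ))) := by
      calc _ ≤ _ := mul_le_mul_of_nonneg_right h3 (norm_nonneg _)
        _ ≤ _ := h0
        _ ≤ _ := by gcongr
    have h7 : τ * ‖riemannZeta (1 + x + 2 * Complex.I * y)‖ ≤ τ * (4 * C * τ ^ (1/60 : ℝ)) := by
      linarith
    exact le_of_mul_le_mul_left h7 hτ
  have h1 : 1 ≤ (C / x) ^ 3 * (2 * m / τ) ^ 4 * (4 * C * τ ^ (1/60 : ℝ)) := by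
    refine (P_341 x hx y).trans ?_
    gcongr
  have h2 : τ ^ (4 - 1/60 : ℝ) = τ ^ 4 / τ ^ (1/60 : ℝ) := by
    rw [Real.rpow_sub hτ]; norm_cast
  rw [h2]
  have h3 : 0 < τ ^ (1/60 : ℝ) := by positivity
  set w := τ ^ (1/60 : ℝ)
  have h4 : (C / x) ^ 3 * (2 * m / τ) ^ 4 * (4 * C * w) = (64 * C ^ 4 * m ^ 4 * w) / (x ^ 3 * τ ^ 4) := by
    field_simp; ring
  rw [h4, one_le_div (by positivity)] at h1
  rw [← mul_div_assoc, div_le_iff₀ h3]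
  exact h1

lemma P_lower : ∃ c : ℝ, 0 < c ∧ ∀ s : ℂ, 1 < s.re → s.re ≤ 2 →
    c * (1 + |s.im|) ^ (1 - 1/15 : ℝ) ≤ ‖riemannZeta₁ s‖ := by
  obtain ⟨C, hC, h⟩ := P_lower_aux
  obtain ⟨C', hC', h'⟩ := P_cauchy
  -- compact part
  obtain ⟨c0, hc0, hcomp⟩ : ∃ c : ℝ, 0 < c ∧ ∀ s : ℂ, 1 < s.re → s.re ≤ 2 → |s.im| ≤ 1 →
      c ≤ ‖riemannZeta₁ s‖ := by
    have hK : IsCompact (Set.Icc (1:ℝ) 2 ×ℂ Set.Icc (-1:ℝ) 1) := isCompact_Icc.reProdIm isCompact_Icc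
    obtain ⟨z, hz, hmin⟩ := hK.exists_isMinOn (f := fun z => ‖riemannZeta₁ z‖)
      ⟨1, by simp [Complex.mem_reProdIm]⟩ differentiable_riemannZeta₁.continuous.norm.continuousOn
    refine ⟨_, norm_pos_iff.mpr (P_zeta1_ne (Complex.mem_reProdIm.mp hz).1.1), fun s h1 h2 h3 => ?_⟩
    exact hmin (Complex.mem_reProdIm.mpr ⟨⟨h1.le, h2⟩, abs_le.mp h3⟩)
  set k : ℝ := 1 / (6 * C * C')
  have hk : 0 < k := by positivity
  have hk1 : k ≤ 1 := by
    simp only [k]; rw [div_le_one (by positivity)]; nlinarith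
  have hbig : ∀ x y : ℝ, 0 < x → x ≤ 1 → 1 ≤ |y| → k ^ 4 * (1 + |y|) ^ (-(1/12) : ℝ) ≤ x →
      k ^ 3 / (3 * C) * (1 + |y|) ^ (1 - 1/15 : ℝ) ≤ ‖riemannZeta₁ (1 + x + Complex.I * y)‖ := by
    intro x y hx hx1 hy hxk
    have h0 := h x y hx hx1 hy
    set τ := 1 + |y|
    have hτ : 0 < τ := by positivity
    have h1 : (k ^ 4 * τ ^ (-(1/12) : ℝ)) ^ 3 * τ ^ (4 - 1/60 : ℝ) ≤
        64 * C ^ 4 * ‖riemannZeta₁ (1 + x + Complex.I * y)‖ ^ 4 := by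
      refine le_trans ?_ h0
      gcongr
    have h2 : (τ ^ (-(1/12) : ℝ)) ^ 3 * τ ^ (4 - 1/60 : ℝ) = (τ ^ (1 - 1/15 : ℝ)) ^ 4 := by
      rw [← Real.rpow_natCast, ← Real.rpow_natCast, ← Real.rpow_mul hτ.le, ← Real.rpow_mul hτ.le,
        ← Real.rpow_add hτ]
      norm_num
    rw [mul_pow, mul_assoc, h2] at h1
    refine le_of_pow_le_pow_left₀ (n := 4) (by norm_num) (norm_nonneg _) ?_
    set T := τ ^ (1 - 1/15 : ℝ)
    set m := ‖riemannZeta₁ (1 + x + Complex.I * y)‖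
    have hm : 0 ≤ m ^ 4 := by positivity
    rw [mul_pow, div_pow, div_mul_eq_mul_div, div_le_iff₀ (by positivity)]
    have : 0 ≤ C ^ 4 * m ^ 4 := by positivity
    calc (k ^ 3) ^ 4 * T ^ 4 = (k ^ 4) ^ 3 * T ^ 4 := by ring
      _ ≤ _ := h1
      _ ≤ m ^ 4 * (3 * C) ^ 4 := by rw [mul_pow]; linarith
  refine ⟨min (c0 / 2) (k ^ 3 / (6 * C)), by positivity, fun s h1 h2 => ?_⟩
  set τ := 1 + |s.im|
  have hτ : 1 ≤ τ := by simp [τ]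
  have hT : 0 ≤ τ ^ (1 - 1/15 : ℝ) := by positivity
  rcases le_total |s.im| 1 with hy | hy
  · have := hcomp s h1 h2 hy
    have h3 : τ ^ (1 - 1/15 : ℝ) ≤ 2 := by
      calc τ ^ (1 - 1/15 : ℝ) ≤ τ ^ (1 : ℝ) := by gcongr; norm_num
        _ = τ := Real.rpow_one _
        _ ≤ 2 := by simp only [τ]; linarith
    calc _ ≤ (c0 / 2) * τ ^ (1 - 1/15 : ℝ) := by gcongr; exact min_le_left _ _
      _ ≤ (c0 / 2) * 2 := by gcongr
      _ ≤ _ := by linarith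
  · refine le_trans (mul_le_mul_of_nonneg_right (min_le_right _ _) hT) ?_
    set x := s.re - 1
    set y := s.im
    have hs : s = 1 + x + Complex.I * y := by
      apply Complex.ext <;> simp [x, y]
    set x1 := k ^ 4 * τ ^ (-(1/12) : ℝ)
    have hx10 : 0 < x1 := by positivity
    have hx11 : x1 ≤ 1 := by
      have : τ ^ (-(1/12) : ℝ) ≤ 1 := Real.rpow_le_one_of_one_le_of_nonpos hτ (by norm_num)
      have : k ^ 4 ≤ 1 := pow_le_one₀ hk.le hk1
      exact mul_le_one₀ this (by positivity) (by assumption)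
    have hx0 : 0 < x := by simp only [x]; linarith
    have hx2 : x ≤ 1 := by simp only [x]; linarith
    rcases le_total x1 x with hc | hc
    · have := hbig x y hx0 hx2 hy hc
      rw [hs]
      refine le_trans ?_ this
      have h6 : k ^ 3 / (6 * C) ≤ k ^ 3 / (3 * C) := by gcongr; norm_num
      gcongr
    · have hb := hbig x1 y hx10 hx11 hy le_rfl
      have hmv := norm_image_sub_le_of_norm_deriv_le_segment' (a := x) (b := x1)
        (f := fun u : ℝ => riemannZeta₁ (1 + u + Complex.I * y))
        (f' := fun u : ℝ => deriv riemannZeta₁ (1 + u + Complex.I * y))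
        (C := C' * τ ^ (1 + 1/60 : ℝ)) (fun u hu => ?_) (fun u hu => ?_) x1 ⟨hc, le_rfl⟩
      · have h5 : C' * τ ^ (1 + 1/60 : ℝ) * (x1 - x) ≤ k ^ 3 / (6 * C) * τ ^ (1 - 1/15 : ℝ) := by
          calc _ ≤ C' * τ ^ (1 + 1/60 : ℝ) * x1 := by gcongr; linarith
            _ = (C' * k ^ 4) * (τ ^ (1 + 1/60 : ℝ) * τ ^ (-(1/12) : ℝ)) := by simp only [x1]; ring
            _ = (C' * k ^ 4) * τ ^ (1 - 1/15 : ℝ) := by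
              rw [← Real.rpow_add (by linarith)]; norm_num
            _ ≤ _ := by
              gcongr
              have : k * (6 * C * C') = 1 := by simp only [k]; field_simp
              rw [le_div_iff₀ (by positivity)]
              have : C' * k ^ 4 * (6 * C) = k ^ 3 * (k * (6 * C * C')) := by ring
              rw [this]; simp [*]
        have h6 := norm_sub_norm_le (riemannZeta₁ (1 + x1 + Complex.I * y))
          (riemannZeta₁ (1 + x + Complex.I * y))
        rw [hs]
        have h7 : k ^ 3 / (3 * C) = 2 * (k ^ 3 / (6 * C)) := by field_simp; norm_num
        rw [h7] at hb
        have h8 : 1 + |y| = τ := rfl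
        rw [h8] at hb
        nlinarith [h6, hmv, h5, hb]
      · have hd : HasDerivAt (fun w : ℂ => riemannZeta₁ (1 + w + Complex.I * y))
            (deriv riemannZeta₁ (1 + u + Complex.I * y)) (u : ℂ) := by
          have h9 : HasDerivAt (fun w : ℂ => (1 + w + Complex.I * y)) 1 (u : ℂ) := by
            simpa using ((hasDerivAt_id (u:ℂ)).const_add 1).add_const (Complex.I * y)
          have := (differentiable_riemannZeta₁ (1 + u + Complex.I * y)).hasDerivAt.comp (u : ℂ) h9
          rw [mul_one] at this
          exact this
        exact hd.comp_ofReal.hasDerivWithinAt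
      · have h9 := h' (1 + u + Complex.I * y) (by simp; linarith [hu.1])
          (by simp; linarith [hu.2]) 1 (by norm_num)
        rw [iteratedDeriv_one] at h9
        simpa using h9

/-- Ratios of derivatives grow slowly. -/
lemma P_ratio : ∃ C : ℝ, 1 ≤ C ∧ ∀ s : ℂ, 1 < s.re → s.re ≤ 2 → ∀ j : ℕ, j ≤ 3 →
    ‖iteratedDeriv j riemannZeta₁ s / riemannZeta₁ s‖ ≤ C * (1 + |s.im|) ^ (1/12 : ℝ) := by
  obtain ⟨c, hc, h⟩ := P_lower
  obtain ⟨C, hC, h'⟩ := P_cauchy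
  refine ⟨1 + C / c, by simp; positivity, fun s h1 h2 j hj => ?_⟩
  have e1 := h s h1 h2
  have e2 := h' s h1.le (by linarith) j hj
  set τ := 1 + |s.im|
  have hτ : 0 < τ := by positivity
  rw [norm_div]
  have e3 : τ ^ (1 + 1/60 : ℝ) = τ ^ (1/12 : ℝ) * τ ^ (1 - 1/15 : ℝ) := by
    rw [← Real.rpow_add hτ]; norm_num
  have hT : 0 < τ ^ (1 - 1/15 : ℝ) := by positivity
  have hS : 0 < τ ^ (1/12 : ℝ) := by positivity
  calc _ ≤ C * τ ^ (1 + 1/60 : ℝ) / (c * τ ^ (1 - 1/15 : ℝ)) := by gcongr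
    _ = C / c * τ ^ (1/12 : ℝ) := by rw [e3]; field_simp
    _ ≤ _ := by gcongr; linarith


noncomputable def PR (j : ℕ) (s : ℂ) : ℂ := iteratedDeriv j riemannZeta₁ s / riemannZeta₁ s
noncomputable def PH (s : ℂ) : ℂ := -(PR 1 s + 1) / s
noncomputable def PH1 (s : ℂ) : ℂ := -(PR 2 s - PR 1 s ^ 2) / s + (PR 1 s + 1) / s ^ 2
noncomputable def PH2 (s : ℂ) : ℂ :=
  -(PR 3 s - PR 1 s * PR 2 s - 2 * PR 1 s * (PR 2 s - PR 1 s ^ 2)) / s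
    + 2 * (PR 2 s - PR 1 s ^ 2) / s ^ 2 - 2 * (PR 1 s + 1) / s ^ 3

lemma PR_deriv (j : ℕ) {s : ℂ} (hs : 1 ≤ s.re) :
    HasDerivAt (PR j) (PR (j + 1) s - PR j s * PR 1 s) s := by
  have hne := P_zeta1_ne hs
  have hd : ∀ j : ℕ, HasDerivAt (iteratedDeriv j riemannZeta₁) (iteratedDeriv (j + 1) riemannZeta₁ s) s := by
    intro j
    rw [iteratedDeriv_succ]
    have : ContDiff ℂ ⊤ riemannZeta₁ := differentiable_riemannZeta₁.contDiff
    exact ((this.differentiable_iteratedDeriv j (WithTop.coe_lt_top _)) s).hasDerivAt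
  have h0 : HasDerivAt riemannZeta₁ (iteratedDeriv 1 riemannZeta₁ s) s := by
    simpa using hd 0
  have := (hd j).div h0 hne
  refine this.congr_deriv ?_
  unfold PR
  field_simp

lemma PH_deriv {s : ℂ} (hs : 1 ≤ s.re) : HasDerivAt PH (PH1 s) s := by
  have h0 : s ≠ 0 := by rintro rfl; norm_num at hs
  have := (((PR_deriv 1 hs).add_const 1).neg).div (hasDerivAt_id s) h0
  refine this.congr_deriv ?_
  unfold PH1
  simp only [Pi.neg_apply, id]
  field_simp
  ring

lemma PH1_deriv {s : ℂ} (hs : 1 ≤ s.re) : HasDerivAt PH1 (PH2 s) s := by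
  have h0 : s ≠ 0 := by rintro rfl; norm_num at hs
  have h1 := PR_deriv 1 hs
  have h2 := PR_deriv 2 hs
  have := (((h2.sub (h1.pow 2)).neg).div (hasDerivAt_id s) h0).add
    ((h1.add_const 1).div ((hasDerivAt_id s).pow 2) (pow_ne_zero 2 h0))
  refine this.congr_deriv ?_
  unfold PH2
  simp only [Pi.neg_apply, Pi.sub_apply, Pi.pow_apply, id]
  field_simp
  ring

lemma PH2_bound : ∃ C : ℝ, 0 < C ∧ ∀ s : ℂ, 1 < s.re → s.re ≤ 2 →
    ‖PH2 s‖ ≤ C * (1 + |s.im|) ^ (-(3/4) : ℝ) := by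
  obtain ⟨C, hC, h⟩ := P_ratio
  refine ⟨28 * C ^ 3, by positivity, fun s h1 h2 => ?_⟩
  have e1 : ‖PR 1 s‖ ≤ _ := h s h1 h2 1 (by norm_num)
  have e2 : ‖PR 2 s‖ ≤ _ := h s h1 h2 2 (by norm_num)
  have e3 : ‖PR 3 s‖ ≤ _ := h s h1 h2 3 (by norm_num)
  set τ := 1 + |s.im|
  have hτ : 1 ≤ τ := by simp [τ]
  have hw : 1 ≤ τ ^ (1/12 : ℝ) := Real.one_le_rpow hτ (by norm_num)
  have hw3 : (τ ^ (1/12 : ℝ)) ^ 3 = τ * τ ^ (-(3/4) : ℝ) := by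
    rw [← Real.rpow_natCast, ← Real.rpow_mul (by linarith)]
    nth_rewrite 2 [← Real.rpow_one τ]
    rw [← Real.rpow_add (by linarith)]; norm_num
  set R := C * τ ^ (1/12 : ℝ)
  have hR : 1 ≤ R := by simp only [R]; nlinarith
  have hR3 : R ^ 3 = C ^ 3 * (τ * τ ^ (-(3/4) : ℝ)) := by simp only [R]; rw [mul_pow, hw3]
  have hs1 : 1 ≤ ‖s‖ := by
    have := Complex.abs_re_le_norm s
    rw [abs_of_pos (by linarith)] at this; linarith
  have hs2 : τ ≤ 2 * ‖s‖ := by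
    have := Complex.abs_im_le_norm s
    simp only [τ]; linarith
  have q1 : ‖PR 1 s + 1‖ ≤ 2 * R := by
    refine (norm_add_le _ _).trans ?_; rw [norm_one]; linarith
  have q2 : ‖PR 2 s - PR 1 s ^ 2‖ ≤ 2 * R ^ 2 := by
    refine (norm_sub_le _ _).trans ?_
    rw [norm_pow]
    have : ‖PR 1 s‖ ^ 2 ≤ R ^ 2 := by gcongr
    nlinarith
  have q3 : ‖PR 3 s - PR 1 s * PR 2 s - 2 * PR 1 s * (PR 2 s - PR 1 s ^ 2)‖ ≤ 6 * R ^ 3 := by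
    refine (norm_sub_le _ _).trans ?_
    have a1 := norm_sub_le (PR 3 s) (PR 1 s * PR 2 s)
    rw [norm_mul] at a1
    have a2 : ‖PR 1 s‖ * ‖PR 2 s‖ ≤ R * R := by gcongr
    have a3 : ‖2 * PR 1 s * (PR 2 s - PR 1 s ^ 2)‖ ≤ 2 * R * (2 * R ^ 2) := by
      rw [norm_mul, norm_mul]
      simp only [Complex.norm_ofNat]
      gcongr
    have a4 : R ≤ R ^ 3 := by nlinarith [sq_nonneg R]
    have a5 : R * R ≤ R ^ 3 := by nlinarith [sq_nonneg R]
    nlinarith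
  have hn : 0 < ‖s‖ := by linarith
  have t1 : ‖-(PR 3 s - PR 1 s * PR 2 s - 2 * PR 1 s * (PR 2 s - PR 1 s ^ 2)) / s‖ ≤ 6 * R ^ 3 / ‖s‖ := by
    rw [norm_div, norm_neg]; gcongr
  have t2 : ‖2 * (PR 2 s - PR 1 s ^ 2) / s ^ 2‖ ≤ 4 * R ^ 3 / ‖s‖ := by
    rw [norm_div, norm_mul, norm_pow, Complex.norm_ofNat]
    have : ‖s‖ ≤ ‖s‖ ^ 2 := by nlinarith
    have a5 : R ^ 2 ≤ R ^ 3 := by nlinarith [sq_nonneg R]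
    have b : 2 * ‖PR 2 s - PR 1 s ^ 2‖ ≤ 4 * R ^ 3 := by linarith
    exact div_le_div₀ (by positivity) b hn this
  have t3 : ‖2 * (PR 1 s + 1) / s ^ 3‖ ≤ 4 * R ^ 3 / ‖s‖ := by
    rw [norm_div, norm_mul, norm_pow, Complex.norm_ofNat]
    have : ‖s‖ ≤ ‖s‖ ^ 3 := by
      have : 1 ≤ ‖s‖ ^ 2 := by nlinarith
      nlinarith
    have a4 : R ≤ R ^ 3 := by nlinarith [sq_nonneg R]
    have b : 2 * ‖PR 1 s + 1‖ ≤ 4 * R ^ 3 := by linarith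
    exact div_le_div₀ (by positivity) b hn this
  unfold PH2
  refine (norm_sub_le _ _).trans ?_
  refine (add_le_add_left (norm_add_le _ _) _).trans ?_
  calc _ ≤ 6 * R ^ 3 / ‖s‖ + 4 * R ^ 3 / ‖s‖ + 4 * R ^ 3 / ‖s‖ := by gcongr
    _ = 14 * R ^ 3 / ‖s‖ := by ring
    _ ≤ _ := by
      rw [div_le_iff₀ hn, hR3]
      have : 0 ≤ C ^ 3 * τ ^ (-(3/4) : ℝ) := by positivity
      nlinarith

open MeasureTheory FourierTransform SchwartzMap ContDiff in
lemma P_plancherel (f : ℝ → ℂ) (hf : Integrable f) (hf2 : MemLp f 2) :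
    eLpNorm (𝓕 f) 2 volume = eLpNorm f 2 volume := by
  set F : Lp ℂ 2 (volume : Measure ℝ) := hf2.toLp f with hF
  have key : ((𝓕 F : Lp ℂ 2 (volume : Measure ℝ)) : ℝ → ℂ) =ᵐ[volume] 𝓕 f := by
    have hc : Continuous (𝓕 f) :=
      VectorFourier.fourierIntegral_continuous Real.continuous_fourierChar
        (L := innerₗ ℝ) (by exact continuous_inner) hf
    refine ae_eq_of_integral_contDiff_smul_eq ?_ hc.locallyIntegrable ?_
    · exact (Lp.memLp (𝓕 F)).locallyIntegrable (by norm_num)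
    · intro g hg hgs
      have h1 := Lp.fourier_toTemperedDistribution_eq F
      have hgC : ContDiff ℝ ∞ (fun x => (g x : ℂ)) := Complex.ofRealCLM.contDiff.comp hg
      have hgS : HasCompactSupport (fun x => (g x : ℂ)) := hgs.comp_left (g := fun x : ℝ => (x : ℂ)) (by simp)
      have h2 := DFunLike.congr_fun h1 (hgS.toSchwartzMap hgC)
      simp only [TemperedDistribution.fourier_apply, Lp.toTemperedDistribution_apply] at h2
      have h3 : ∫ x, g x • (𝓕 F : Lp ℂ 2 (volume : Measure ℝ)) x = ∫ x, (hgS.toSchwartzMap hgC) x • (𝓕 F : Lp ℂ 2 (volume : Measure ℝ)) x := by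
        congr 1
      rw [h3, ← h2]
      have h4 := VectorFourier.integral_fourierIntegral_smul_eq_flip (L := innerₗ ℝ) (μ := volume) (ν := volume)
          (f := fun x => (g x : ℂ)) (g := f) Real.continuous_fourierChar (by exact continuous_inner)
          (hgC.continuous.integrable_of_hasCompactSupport hgS) hf
      have h5 : ∫ x, (𝓕 (hgS.toSchwartzMap hgC)) x • F x = ∫ x, (𝓕 (hgS.toSchwartzMap hgC)) x • f x := by
        apply integral_congr_ae
        filter_upwards [hf2.coeFn_toLp] with x hx
        rw [hF, hx]
      rw [h5]
      have hflip : (innerₗ ℝ).flip = (innerₗ ℝ : ℝ →ₗ[ℝ] ℝ →ₗ[ℝ] ℝ) := flip_innerₗ ℝ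
      rw [hflip] at h4
      have h6 : ∀ x, 𝓕 (hgS.toSchwartzMap hgC) x = 𝓕 (fun x => (g x : ℂ)) x := by
        intro x
        rw [SchwartzMap.fourier_coe]; rfl
      simp_rw [h6]
      exact h4
  rw [← eLpNorm_congr_ae key, ← eLpNorm_congr_ae hf2.coeFn_toLp]
  have := Lp.norm_fourier_eq F
  rw [Lp.norm_def, Lp.norm_def] at this
  exact (ENNReal.toReal_eq_toReal_iff' (Lp.eLpNorm_ne_top _) (Lp.eLpNorm_ne_top _)).mp this


noncomputable def PD (t : ℝ) : ℝ := Chebyshev.psi t - t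

lemma PD_bound {t : ℝ} (ht : 0 ≤ t) : |PD t| ≤ 6 * t := by
  have h1 := Chebyshev.psi_le_const_mul_self ht
  have h2 := Chebyshev.psi_nonneg t
  have h3 : Real.log 4 ≤ 2 := by
    have : Real.log 4 = 2 * Real.log 2 := by
      rw [show (4:ℝ) = 2 ^ 2 by norm_num, Real.log_pow]; norm_num
    have := Real.log_two_lt_d9
    linarith
  unfold PD
  rw [abs_le]
  constructor <;> nlinarith

lemma PD_meas : Measurable PD := Chebyshev.psi_mono.measurable.sub measurable_id

lemma P_cpow_meas (a : ℂ) : MeasureTheory.AEStronglyMeasurable (fun t : ℝ => (t : ℂ) ^ a)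
    (MeasureTheory.volume.restrict (Set.Ioi 1)) := by
  refine ContinuousOn.aestronglyMeasurable ?_ measurableSet_Ioi
  intro t ht
  have ht' : (1 : ℝ) < t := ht
  refine ContinuousAt.continuousWithinAt ?_
  exact (continuousAt_cpow_const (Or.inl (by simpa using (by linarith : (0:ℝ) < t)))).comp
    Complex.continuous_ofReal.continuousAt

open MeasureTheory in
lemma P_psi_integral {s : ℂ} (hs : 1 < s.re) :
    ∫ t in Set.Ioi (1 : ℝ), ((PD t : ℝ) : ℂ) * (t : ℂ) ^ (-(s + 1)) = PH s := by
  have h1 := LSeries_eq_mul_integral_of_nonneg (fun n => ArithmeticFunction.vonMangoldt n)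
    (r := 1) (by norm_num) hs ?_ (fun n => ArithmeticFunction.vonMangoldt_nonneg)
  · have h2 := ArithmeticFunction.LSeries_vonMangoldt_eq_deriv_riemannZeta_div hs
    have hs0 : s ≠ 0 := by rintro rfl; norm_num at hs
    have hs1 : s ≠ 1 := by rintro rfl; norm_num at hs
    have hs1' : s - 1 ≠ 0 := sub_ne_zero.mpr hs1
    have hz : riemannZeta s ≠ 0 := riemannZeta_ne_zero_of_one_le_re hs.le
    have h3 : ∀ t : ℝ, (∑ k ∈ Finset.Icc 1 ⌊t⌋₊, ((ArithmeticFunction.vonMangoldt k : ℝ) : ℂ)) =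
        ((Chebyshev.psi t : ℝ) : ℂ) := by
      intro t
      rw [Chebyshev.psi_eq_sum_Icc, ← Finset.insert_Icc_add_one_left_eq_Icc (Nat.zero_le _),
        Finset.sum_insert (by simp)]
      simp
    have h4 : ∀ t ∈ Set.Ioi (1:ℝ), ((PD t : ℝ) : ℂ) * (t : ℂ) ^ (-(s + 1)) =
        ((Chebyshev.psi t : ℝ) : ℂ) * (t : ℂ) ^ (-(s + 1)) - (t : ℂ) ^ (-s) := by
      intro t ht
      have ht' : (1 : ℝ) < t := ht
      have ht0 : (t : ℂ) ≠ 0 := by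
        have : t ≠ 0 := by linarith
        exact_mod_cast this
      have : (t : ℂ) ^ (-s) = t * (t : ℂ) ^ (-(s + 1)) := by
        rw [show -s = 1 + (-(s+1)) by ring, Complex.cpow_add _ _ ht0, Complex.cpow_one]
      rw [this]
      unfold PD
      push_cast
      ring
    have hi2 : IntegrableOn (fun t : ℝ => (t : ℂ) ^ (-s)) (Set.Ioi 1) :=
      integrableOn_Ioi_cpow_of_lt (by simpa using hs) one_pos
    have hi1 : IntegrableOn (fun t : ℝ => ((Chebyshev.psi t : ℝ) : ℂ) * (t : ℂ) ^ (-(s + 1))) (Set.Ioi 1) := by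
      have hb : IntegrableOn (fun t : ℝ => (Real.log 4 + 4) * t ^ (-s.re)) (Set.Ioi 1) :=
        (integrableOn_Ioi_rpow_of_lt (by linarith) one_pos).const_mul _
      refine Integrable.mono' hb ?_ ?_
      · exact (Complex.measurable_ofReal.comp Chebyshev.psi_mono.measurable).aestronglyMeasurable.mul
          (P_cpow_meas _)
      · filter_upwards [ae_restrict_mem measurableSet_Ioi] with t ht
        have ht' : (1 : ℝ) < t := ht
        have ht0 : 0 < t := by linarith
        rw [norm_mul, Complex.norm_cpow_eq_rpow_re_of_pos ht0, Complex.norm_real, Real.norm_eq_abs,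
          abs_of_nonneg (Chebyshev.psi_nonneg t)]
        have e : t ^ (-s.re) = t * t ^ ((-(s+1)).re) := by
          nth_rewrite 2 [← Real.rpow_one t]
          rw [← Real.rpow_add ht0]
          congr 1
          simp
        rw [e, ← mul_assoc]
        gcongr
        exact Chebyshev.psi_le_const_mul_self ht0.le
    rw [setIntegral_congr_fun measurableSet_Ioi h4, integral_sub hi1 hi2,
      integral_Ioi_cpow_of_lt (by simpa using hs) one_pos]
    simp only [h3] at h1
    rw [h2] at h1
    have h5 : ∫ (t : ℝ) in Set.Ioi 1, ((Chebyshev.psi t : ℝ) : ℂ) * (t : ℂ) ^ (-(s + 1)) =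
        -deriv riemannZeta s / riemannZeta s / s := by
      rw [h1]; field_simp
    rw [h5]
    have h6 : deriv riemannZeta₁ s = riemannZeta s + (s - 1) * deriv riemannZeta s := by
      have e : riemannZeta₁ =ᶠ[nhds s] fun z => (z - 1) * riemannZeta z := by
        filter_upwards [isOpen_ne.mem_nhds hs1] with z hz
        exact P_zeta1_eq hz
      rw [e.deriv_eq]
      have := ((hasDerivAt_id s).sub_const 1).mul (differentiableAt_riemannZeta hs1).hasDerivAt
      simpa using! this.deriv
    have hne : -s + 1 ≠ 0 := by
      intro h; apply hs1'; linear_combination -h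
    unfold PH PR
    rw [iteratedDeriv_one, h6, P_zeta1_eq hs1]
    simp only [Complex.ofReal_one, Complex.one_cpow]
    rw [show -s + 1 = -(s - 1) by ring, neg_div_neg_eq]
    field_simp
    ring
  · refine Asymptotics.IsBigO.of_bound (Real.log 4 + 4) ?_
    filter_upwards with n
    have : ∑ k ∈ Finset.Icc 1 n, ArithmeticFunction.vonMangoldt k = Chebyshev.psi n := by
      rw [Chebyshev.psi_eq_sum_Icc, Nat.floor_natCast, ← Finset.insert_Icc_add_one_left_eq_Icc (Nat.zero_le _),
        Finset.sum_insert (by simp)]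
      simp
    rw [this, Real.rpow_one, Real.norm_eq_abs, Real.norm_eq_abs, abs_of_nonneg (Chebyshev.psi_nonneg _),
      abs_of_nonneg (Nat.cast_nonneg _)]
    exact Chebyshev.psi_le_const_mul_self (Nat.cast_nonneg _)

noncomputable def Pf (σ : ℝ) : ℝ → ℂ :=
  (Set.Ioi 0).indicator (fun u => ((Real.exp (-σ * u) * PD (Real.exp u) : ℝ) : ℂ))

lemma Pf_meas (σ : ℝ) : Measurable (Pf σ) := by
  unfold Pf
  refine Measurable.indicator ?_ measurableSet_Ioi
  have := PD_meas
  fun_prop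

lemma Pf_norm (σ u : ℝ) (hu : 0 < u) : ‖Pf σ u‖ = Real.exp (-σ * u) * |PD (Real.exp u)| := by
  unfold Pf
  rw [Set.indicator_of_mem (by exact hu), Complex.norm_real, norm_mul, Real.norm_eq_abs, Real.norm_eq_abs,
    Real.abs_exp]

lemma Pf_bound (σ u : ℝ) (hu : 0 < u) : ‖Pf σ u‖ ≤ 6 * Real.exp (-(σ-1) * u) := by
  rw [Pf_norm σ u hu]
  calc _ ≤ Real.exp (-σ * u) * (6 * Real.exp u) := by gcongr; exact PD_bound (Real.exp_pos _).le
    _ = _ := by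
      rw [show -(σ-1) * u = -σ * u + u by ring, Real.exp_add]; ring

lemma Pf_zero (σ u : ℝ) (hu : u ≤ 0) : Pf σ u = 0 := by
  unfold Pf
  rw [Set.indicator_of_notMem (by simpa using hu)]

open MeasureTheory in
lemma P_expint (k : ℕ) (b : ℝ) (hb : 0 < b) :
    Integrable ((Set.Ioi (0:ℝ)).indicator (fun u => u ^ k * Real.exp (-b * u))) := by
  rw [integrable_indicator_iff measurableSet_Ioi]
  have := integrableOn_rpow_mul_exp_neg_mul_rpow (p := 1) (s := (k:ℝ)) (b := b)
    (by have : (0:ℝ) ≤ k := Nat.cast_nonneg k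
        linarith) one_pos hb
  simpa using this

open MeasureTheory in
lemma Pf_int (σ : ℝ) (hσ : 1 < σ) (k : ℕ) : Integrable (fun u : ℝ => (u ^ k) • Pf σ u) := by
  refine Integrable.mono' ((P_expint k (σ-1) (by linarith)).const_mul 6) ?_ ?_
  · have := Pf_meas σ
    exact Measurable.aestronglyMeasurable (by fun_prop)
  · filter_upwards with u
    rcases le_or_gt u 0 with hu | hu
    · rw [Pf_zero σ u hu, Set.indicator_of_notMem (by simpa using hu)]; simp
    · rw [Set.indicator_of_mem (by exact hu), norm_smul, Real.norm_eq_abs, abs_of_pos (by positivity)]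
      have := Pf_bound σ u hu
      have hk : 0 < u ^ k := by positivity
      nlinarith

open MeasureTheory in
lemma Pf_L2 (σ : ℝ) (hσ : 1 < σ) : MemLp (fun u : ℝ => (u ^ 2) • Pf σ u) 2 := by
  rw [memLp_two_iff_integrable_sq_norm (Pf_int σ hσ 2).aestronglyMeasurable]
  refine Integrable.mono' ((P_expint 4 (2*(σ-1)) (by linarith)).const_mul 36) ?_ ?_
  · have := Pf_meas σ
    exact Measurable.aestronglyMeasurable (by fun_prop)
  · filter_upwards with u
    rcases le_or_gt u 0 with hu | hu
    · rw [Pf_zero σ u hu, Set.indicator_of_notMem (by simpa using hu)]; simp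
    · rw [Set.indicator_of_mem (by exact hu), norm_smul, Real.norm_eq_abs, Real.norm_eq_abs,
        abs_of_pos (by positivity : (0:ℝ) < u ^ 2), abs_of_nonneg (by positivity)]
      have := Pf_bound σ u hu
      calc (u ^ 2 * ‖Pf σ u‖) ^ 2 ≤ (u ^ 2 * (6 * Real.exp (-(σ-1) * u))) ^ 2 := by gcongr
        _ = 36 * (u ^ 4 * Real.exp (-(σ-1)*u) ^ 2) := by ring
        _ = _ := by
          rw [← Real.exp_nat_mul]; congr 3; push_cast; ring

open MeasureTheory FourierTransform in
lemma Pf_fourier (σ : ℝ) (hσ : 1 < σ) (t : ℝ) :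
    𝓕 (Pf σ) t = PH (σ + 2 * Real.pi * t * Complex.I) := by
  rw [← P_psi_integral (by simpa using hσ), Real.fourier_real_eq_integral_exp_smul]
  have := integral_comp_exp_Ioi
    (fun x : ℝ => ((PD x : ℝ) : ℂ) * (x : ℂ) ^ (-((σ + 2 * Real.pi * t * Complex.I) + 1))) 0
  rw [Real.exp_zero] at this
  rw [← this, ← integral_indicator measurableSet_Ioi]
  congr 1
  ext u
  rcases le_or_gt u 0 with hu | hu
  · rw [Pf_zero σ u hu, Set.indicator_of_notMem (by simpa using hu)]; simp
  · unfold Pf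
    rw [Set.indicator_of_mem (by exact hu), Set.indicator_of_mem (by exact hu)]
    rw [Complex.cpow_def_of_ne_zero (by exact_mod_cast (Real.exp_pos u).ne'), ← Complex.ofReal_log (Real.exp_pos u).le,
      Real.log_exp, Complex.real_smul, smul_eq_mul]
    push_cast
    rw [mul_comm (Complex.exp _) ((PD _ : ℝ) : ℂ), mul_left_comm, mul_left_comm (Complex.exp (u:ℂ)),
      ← Complex.exp_add, ← Complex.exp_add]
    congr 2
    ring

open MeasureTheory FourierTransform in
lemma P_fd (f : ℝ → ℂ) (G : ℂ → ℂ) (d : ℂ) (σ t : ℝ) (hf : Integrable f)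
    (hf' : Integrable (fun u : ℝ => u • f u))
    (h : ∀ t : ℝ, 𝓕 f t = G (σ + 2 * Real.pi * t * Complex.I))
    (hG : HasDerivAt G d (σ + 2 * Real.pi * t * Complex.I)) :
    𝓕 (fun u : ℝ => u • f u) t = - d := by
  have h1 := Real.hasDerivAt_fourier hf hf' t
  have h2 : HasDerivAt (fun t : ℝ => (σ + 2 * Real.pi * t * Complex.I : ℂ)) (2 * Real.pi * Complex.I) t := by
    have := ((Complex.ofRealCLM.hasDerivAt (x := t)).const_mul (2 * Real.pi * Complex.I : ℂ)).const_add (σ : ℂ)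
    convert! this using 1
    · ext t; simp; ring
    · simp
  have h3 := HasDerivAt.comp t hG h2
  have h4 : (G ∘ fun t : ℝ => (σ + 2 * Real.pi * t * Complex.I : ℂ)) = 𝓕 f := by
    ext t; simp [h]
  rw [h4] at h3
  have h5 := h1.unique h3
  have h6 : 𝓕 (fun u : ℝ => (-2 * Real.pi * Complex.I * u : ℂ) • f u) t =
      (-2 * Real.pi * Complex.I : ℂ) * 𝓕 (fun u : ℝ => u • f u) t := by
    rw [Real.fourier_real_eq_integral_exp_smul, Real.fourier_real_eq_integral_exp_smul, ← integral_const_mul]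
    congr 1
    ext u
    simp only [smul_eq_mul, Complex.real_smul]
    ring
  rw [h6] at h5
  have h7 : (2 * Real.pi * Complex.I : ℂ) ≠ 0 := Complex.two_pi_I_ne_zero
  have h8 : (2 * Real.pi * Complex.I : ℂ) * (𝓕 (fun u : ℝ => u • f u) t + d) = 0 := by
    linear_combination -h5
  rcases mul_eq_zero.mp h8 with h9 | h9
  · exact absurd h9 h7
  · linear_combination h9

open MeasureTheory FourierTransform in
lemma Pf_fourier2 (σ : ℝ) (hσ : 1 < σ) (t : ℝ) :
    𝓕 (fun u : ℝ => (u ^ 2) • Pf σ u) t = PH2 (σ + 2 * Real.pi * t * Complex.I) := by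
  have i0 : Integrable (Pf σ) := by simpa using Pf_int σ hσ 0
  have i1 : Integrable (fun u : ℝ => u • Pf σ u) := by simpa using Pf_int σ hσ 1
  have i2 := Pf_int σ hσ 2
  have e : (fun u : ℝ => (u ^ 2) • Pf σ u) = fun u : ℝ => u • (u • Pf σ u) := by
    ext u; rw [smul_smul, sq]
  have f1 : ∀ t : ℝ, 𝓕 (fun u : ℝ => u • Pf σ u) t = (fun s => - PH1 s) (σ + 2 * Real.pi * t * Complex.I) := by
    intro t
    exact P_fd (Pf σ) PH _ σ t i0 i1 (Pf_fourier σ hσ) (PH_deriv (by simpa using hσ.le))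
  rw [e] at i2 ⊢
  rw [P_fd _ (fun s => - PH1 s) _ σ t i1 i2 f1 (PH1_deriv (by simpa using hσ.le)).neg, neg_neg]


open MeasureTheory FourierTransform in
lemma P_mean : ∃ K : ℝ, 0 ≤ K ∧ ∀ σ : ℝ, 1 < σ → σ ≤ 2 → ∀ a b c : ℝ, a ≤ b → 0 ≤ c →
    (∀ u ∈ Set.Icc a b, c ≤ ‖(u ^ 2) • Pf σ u‖) → c ^ 2 * (b - a) ≤ K := by
  obtain ⟨C, hC, hb⟩ := PH2_bound
  have hint : Integrable (fun t : ℝ => C ^ 2 * (1 + ‖t‖) ^ (-(3/2) : ℝ)) :=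
    (integrable_one_add_norm (by simp; norm_num)).const_mul _
  refine ⟨∫ t : ℝ, C ^ 2 * (1 + ‖t‖) ^ (-(3/2) : ℝ), integral_nonneg (fun t => by positivity), ?_⟩
  intro σ h1 h2 a b c hab hc hlow
  have hpl := P_plancherel _ (Pf_int σ h1 2) (Pf_L2 σ h1)
  have hpl2 : ∫⁻ t : ℝ, ‖𝓕 (fun u : ℝ => (u ^ 2) • Pf σ u) t‖ₑ ^ 2 = ∫⁻ u : ℝ, ‖(u ^ 2) • Pf σ u‖ₑ ^ 2 := by
    have e1 := eLpNorm_nnreal_pow_eq_lintegral (μ := (volume : Measure ℝ)) (p := 2)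
      (f := 𝓕 (fun u : ℝ => (u ^ 2) • Pf σ u)) (by norm_num)
    have e2 := eLpNorm_nnreal_pow_eq_lintegral (μ := (volume : Measure ℝ)) (p := 2)
      (f := (fun u : ℝ => (u ^ 2) • Pf σ u)) (by norm_num)
    simp only [ENNReal.coe_ofNat, NNReal.coe_ofNat, ENNReal.rpow_ofNat] at e1 e2
    rw [← e1, ← e2, hpl]
  have hup : ∫⁻ t : ℝ, ‖𝓕 (fun u : ℝ => (u ^ 2) • Pf σ u) t‖ₑ ^ 2 ≤
      ENNReal.ofReal (∫ t : ℝ, C ^ 2 * (1 + ‖t‖) ^ (-(3/2) : ℝ)) := by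
    rw [ofReal_integral_eq_lintegral_ofReal hint (Filter.Eventually.of_forall fun t => by positivity)]
    refine lintegral_mono fun t => ?_
    rw [Pf_fourier2 σ h1, ← ofReal_norm, ← ENNReal.ofReal_pow (norm_nonneg _)]
    apply ENNReal.ofReal_le_ofReal
    have h3 := hb (σ + 2 * Real.pi * t * Complex.I) (by simpa using h1) (by simpa using h2)
    have him : (σ + 2 * Real.pi * t * Complex.I : ℂ).im = 2 * Real.pi * t := by simp
    rw [him] at h3
    have h4 : (1 + |2 * Real.pi * t|) ^ (-(3/4) : ℝ) ≤ (1 + ‖t‖) ^ (-(3/4) : ℝ) := by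
      apply Real.rpow_le_rpow_of_nonpos (by positivity) _ (by norm_num)
      rw [abs_mul, Real.norm_eq_abs, abs_of_pos (by positivity : 0 < 2 * Real.pi)]
      have := Real.pi_gt_three
      have := abs_nonneg t
      nlinarith
    calc _ ≤ (C * (1 + ‖t‖) ^ (-(3/4) : ℝ)) ^ 2 := by
          gcongr
          exact h3.trans (by gcongr)
      _ = _ := by
        rw [mul_pow, ← Real.rpow_natCast ((1 + ‖t‖) ^ _), ← Real.rpow_mul (by positivity)]
        norm_num
  have hlo : ENNReal.ofReal (c ^ 2 * (b - a)) ≤ ∫⁻ u : ℝ, ‖(u ^ 2) • Pf σ u‖ₑ ^ 2 := by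
    calc ENNReal.ofReal (c ^ 2 * (b - a)) = ∫⁻ u in Set.Icc a b, ENNReal.ofReal (c ^ 2) := by
          rw [setLIntegral_const, Real.volume_Icc, ENNReal.ofReal_mul (by positivity)]
      _ ≤ ∫⁻ u in Set.Icc a b, ‖(u ^ 2) • Pf σ u‖ₑ ^ 2 := by
          refine setLIntegral_mono' measurableSet_Icc fun u hu => ?_
          rw [← ofReal_norm, ← ENNReal.ofReal_pow (norm_nonneg _)]
          apply ENNReal.ofReal_le_ofReal
          have := hlow u hu
          gcongr
      _ ≤ _ := setLIntegral_le_lintegral _ _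
  rw [← hpl2] at hlo
  exact (ENNReal.ofReal_le_ofReal_iff (integral_nonneg (fun t => by positivity))).mp (hlo.trans hup)

lemma P_psi_pnt : ∃ C : ℝ, 0 < C ∧ ∀ x : ℝ, Real.exp 1 ≤ x → |PD x| ≤ C * (x / Real.log x) := by
  obtain ⟨K, hK, hmean⟩ := P_mean
  set K' := 1536 * Real.exp 2 ^ 2 * K with hK'
  have hK'0 : 0 ≤ K' := by positivity
  refine ⟨K' + 1, by positivity, fun x hx => ?_⟩
  have hx0 : 0 < x := (Real.exp_pos 1).trans_le hx
  set u0 := Real.log x with hu0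
  have hu1 : 1 ≤ u0 := by rw [hu0, Real.le_log_iff_exp_le hx0]; exact hx
  have hexu0 : Real.exp u0 = x := Real.exp_log hx0
  set D := |PD x| / x with hD
  have hD0 : 0 ≤ D := by positivity
  have hD6 : D ≤ 6 := by rw [hD, div_le_iff₀ hx0]; exact PD_bound hx0.le
  have hDx : |PD x| = D * x := by rw [hD]; field_simp
  set σ := 1 + 1 / u0 with hσ
  have hσ1 : 1 < σ := by rw [hσ]; have : 0 < 1 / u0 := by positivity
                         linarith
  have hσ2 : σ ≤ 2 := by
    have : 1 / u0 ≤ 1 := by rw [div_le_one (by linarith)]; exact hu1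
    linarith
  have hσu : σ * u0 = u0 + 1 := by rw [hσ]; field_simp
  set v := D / 24 with hv
  have hv0 : 0 ≤ v := by positivity
  have hv4 : v ≤ 1 / 4 := by rw [hv]; linarith
  -- the general consequence
  have gen : ∀ a : ℝ, u0 - 1/4 ≤ a → a + v ≤ u0 + 1/4 →
      (∀ u ∈ Set.Icc a (a + v), D * x / 2 ≤ |PD (Real.exp u)|) → u0 ^ 4 * D ^ 3 ≤ K' := by
    intro a ha hb h
    have := hmean σ hσ1 hσ2 a (a + v) (u0 ^ 2 * D / (8 * Real.exp 2)) (by linarith) (by positivity) ?_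
    · have e : (u0 ^ 2 * D / (8 * Real.exp 2)) ^ 2 * (a + v - a) = u0 ^ 4 * D ^ 3 / (1536 * Real.exp 2 ^ 2) := by
        rw [hv]; field_simp; ring
      rw [e, div_le_iff₀ (by positivity)] at this
      rw [hK']; linarith
    · intro u hu
      have hul : u0 / 2 ≤ u := by linarith [hu.1]
      have huu : u ≤ u0 + 1/4 := hu.2.trans hb
      have hup : 0 < u := by linarith
      rw [norm_smul, Pf_norm σ u hup, Real.norm_eq_abs, abs_of_pos (by positivity)]
      have e1 : Real.exp (-σ * u) ≥ 1 / (x * Real.exp 2) := by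
        rw [← hexu0, ← Real.exp_add, one_div, ← Real.exp_neg]
        apply Real.exp_le_exp.mpr
        nlinarith
      have e2 := h u hu
      calc u0 ^ 2 * D / (8 * Real.exp 2) = (u0 / 2) ^ 2 * (1 / (x * Real.exp 2) * (D * x / 2)) := by
            field_simp; norm_num
        _ ≤ _ := by gcongr
  have main : u0 ^ 4 * D ^ 3 ≤ K' := by
    rcases le_or_gt 0 (PD x) with hp | hp
    · refine gen u0 (by linarith) (by linarith) ?_
      intro u hu
      rw [abs_of_nonneg hp] at hDx
      have m : Chebyshev.psi x ≤ Chebyshev.psi (Real.exp u) := by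
        apply Chebyshev.psi_mono
        rw [← hexu0]; exact Real.exp_le_exp.mpr hu.1
      have e : Real.exp u ≤ x * (1 + 2 * v) := by
        have : Real.exp u ≤ x * Real.exp v := by
          rw [← hexu0, ← Real.exp_add]; exact Real.exp_le_exp.mpr hu.2
        have e2 : Real.exp v ≤ 1 + 2 * v := by
          have := Real.one_sub_le_exp_neg v
          have h3 : Real.exp v * Real.exp (-v) = 1 := by rw [← Real.exp_add]; simp
          have h4 := Real.exp_pos v
          have h5 : Real.exp v * (1 - v) ≤ 1 := by nlinarith
          nlinarith
        nlinarith
      refine le_trans ?_ (le_abs_self _)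
      unfold PD at hDx ⊢
      have : 0 ≤ D * x := by positivity
      rw [hv] at e
      nlinarith
    · refine gen (u0 - v) (by linarith) (by linarith) ?_
      intro u hu
      rw [abs_of_neg hp] at hDx
      have m : Chebyshev.psi (Real.exp u) ≤ Chebyshev.psi x := by
        apply Chebyshev.psi_mono
        rw [← hexu0]; exact Real.exp_le_exp.mpr (by linarith [hu.2])
      have e : x * (1 - v) ≤ Real.exp u := by
        have : x * Real.exp (-v) ≤ Real.exp u := by
          rw [← hexu0, ← Real.exp_add]; exact Real.exp_le_exp.mpr (by linarith [hu.1])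
        have := Real.one_sub_le_exp_neg v
        nlinarith
      refine le_trans ?_ (neg_le_abs _)
      unfold PD at hDx ⊢
      have : 0 ≤ D * x := by positivity
      rw [hv] at e
      nlinarith
  have fin : u0 * D ≤ K' + 1 := by
    by_contra hcon
    push Not at hcon
    have h1 : 1 < u0 * D := by linarith
    have h2 : (u0 * D) ^ 3 ≤ u0 ^ 4 * D ^ 3 := by
      have : u0 ^ 3 ≤ u0 ^ 4 := pow_le_pow_right₀ hu1 (by norm_num)
      rw [mul_pow]; gcongr
    have h3 : u0 * D ≤ (u0 * D) ^ 3 := le_self_pow₀ h1.le (by norm_num)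
    linarith
  rw [hDx, mul_div_assoc', le_div_iff₀ (by linarith)]
  nlinarith

lemma P_theta_pnt : ∃ C : ℝ, 0 < C ∧ ∀ x : ℝ, 2 ≤ x →
    |Chebyshev.theta x - x| ≤ C * (x / Real.log x) := by
  obtain ⟨C, hC, h⟩ := P_psi_pnt
  obtain ⟨B, hB⟩ := Chebyshev.psi_sub_theta_le_mul_sqrt
  refine ⟨C + 12 + |B| * 2, by positivity, fun x hx => ?_⟩
  have hl : 0 < Real.log x := Real.log_pos (by linarith)
  have hx0 : 0 < x := by linarith
  have hs : √x ≤ 2 * (x / Real.log x) := by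
    have := Real.log_le_sub_one_of_pos (Real.sqrt_pos.mpr hx0)
    rw [Real.log_sqrt hx0.le] at this
    rw [mul_div_assoc', le_div_iff₀ hl]
    nlinarith [Real.sq_sqrt hx0.le, Real.sqrt_nonneg x]
  have h1 : |PD x| ≤ (C + 12) * (x / Real.log x) := by
    have hq : 0 < x / Real.log x := by positivity
    rcases le_or_gt (Real.exp 1) x with he | he
    · have := h x he; nlinarith
    · have := PD_bound hx0.le
      have hl1 : Real.log x ≤ 1 := by
        rw [Real.log_le_iff_le_exp hx0]; exact he.le
      have : x ≤ x / Real.log x := by rw [le_div_iff₀ hl]; nlinarith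
      nlinarith
  have h2 := hB x
  have h3 := Chebyshev.theta_le_psi x
  have h4 : B * √x ≤ |B| * (2 * (x / Real.log x)) := by
    have := le_abs_self B
    have := abs_nonneg B
    have := Real.sqrt_nonneg x
    exact mul_le_mul (le_abs_self B) hs this (abs_nonneg B)
  have h5 : |Chebyshev.theta x - x| ≤ |PD x| + |Chebyshev.psi x - Chebyshev.theta x| := by
    have : Chebyshev.theta x - x = PD x - (Chebyshev.psi x - Chebyshev.theta x) := by unfold PD; ring
    rw [this]; exact abs_sub _ _
  rw [abs_of_nonneg (by linarith : 0 ≤ Chebyshev.psi x - Chebyshev.theta x)] at h5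
  nlinarith


lemma P_log_half {t : ℝ} (ht : 2 ≤ t) : 1 / 2 ≤ Real.log t := by
  have h1 := Real.log_le_log (by norm_num) ht
  have := Real.log_two_gt_d9
  linarith

lemma P_tlog {t y : ℝ} (ht : 2 ≤ t) (hy : t ≤ y) :
    t / Real.log t ^ 3 ≤ 343 * (y / Real.log y ^ 3) := by
  have ht0 : 0 < t := by linarith
  have hlt := P_log_half ht
  have hly := P_log_half (ht.trans hy)
  set w := (y / t) ^ (1/3 : ℝ) with hw
  have h1 : 1 ≤ y / t := by rw [le_div_iff₀ ht0]; linarith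
  have hw1 : 1 ≤ w := Real.one_le_rpow h1 (by norm_num)
  have hw3 : w ^ 3 = y / t := by
    rw [hw, ← Real.rpow_natCast, ← Real.rpow_mul (by linarith)]; norm_num
  have hlog : Real.log y = Real.log t + 3 * Real.log w := by
    have : Real.log (w ^ 3) = Real.log y - Real.log t := by
      rw [hw3, Real.log_div (by linarith) (by linarith)]
    rw [Real.log_pow] at this
    push_cast at this
    linarith
  have hlw : Real.log w ≤ w := (Real.log_le_sub_one_of_pos (by linarith)).trans (by linarith)
  have h2 : Real.log y ≤ 7 * w * Real.log t := by nlinarith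
  have h3 : Real.log y ^ 3 ≤ (7 * w * Real.log t) ^ 3 := by gcongr
  rw [mul_div_assoc', div_le_div_iff₀ (by positivity) (by positivity)]
  have e : t * (7 * w * Real.log t) ^ 3 = 343 * y * Real.log t ^ 3 := by
    rw [mul_pow, mul_pow, hw3]; field_simp; ring
  rw [← e]
  gcongr

lemma Pg_deriv {t : ℝ} (ht : 2 ≤ t) : HasDerivAt (fun t : ℝ => t / Real.log t ^ 2)
    (1 / Real.log t ^ 2 - 2 / Real.log t ^ 3) t := by
  have hl := P_log_half ht
  have hl0 : Real.log t ≠ 0 := by linarith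
  have ht0 : t ≠ 0 := by linarith
  have := (hasDerivAt_id t).div ((Real.hasDerivAt_log ht0).pow 2) (pow_ne_zero 2 hl0)
  refine this.congr_deriv ?_
  simp only [id, Pi.pow_apply]
  field_simp
  ring

lemma PG_deriv {t : ℝ} (ht : 2 ≤ t) : HasDerivAt (fun t : ℝ => t ^ 2 / (2 * Real.log t ^ 2))
    (t / Real.log t ^ 2 - t / Real.log t ^ 3) t := by
  have hl := P_log_half ht
  have hl0 : Real.log t ≠ 0 := by linarith
  have ht0 : t ≠ 0 := by linarith
  have := ((hasDerivAt_id t).pow 2).div (((Real.hasDerivAt_log ht0).pow 2).const_mul 2)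
    (mul_ne_zero two_ne_zero (pow_ne_zero 2 hl0))
  refine this.congr_deriv ?_
  simp only [id, Pi.pow_apply]
  field_simp
  ring

lemma Pg_cont (y : ℝ) : ContinuousOn (fun t : ℝ => 1 / Real.log t ^ 2 - 2 / Real.log t ^ 3) (Set.Icc 2 y) := by
  intro t ht
  have hl := P_log_half ht.1
  have hl0 : Real.log t ≠ 0 := by linarith
  have ht0 : t ≠ 0 := by linarith [ht.1]
  have h2 : Real.log t ^ 2 ≠ 0 := pow_ne_zero _ hl0
  have h3 : Real.log t ^ 3 ≠ 0 := pow_ne_zero _ hl0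
  exact ContinuousAt.continuousWithinAt (by fun_prop (disch := assumption))

lemma PG_cont (y : ℝ) : ContinuousOn (fun t : ℝ => t / Real.log t ^ 2 - t / Real.log t ^ 3) (Set.Icc 2 y) := by
  intro t ht
  have hl := P_log_half ht.1
  have hl0 : Real.log t ≠ 0 := by linarith
  have ht0 : t ≠ 0 := by linarith [ht.1]
  have h2 : Real.log t ^ 2 ≠ 0 := pow_ne_zero _ hl0
  have h3 : Real.log t ^ 3 ≠ 0 := pow_ne_zero _ hl0
  exact ContinuousAt.continuousWithinAt (by fun_prop (disch := assumption))

lemma P_abel {y : ℝ} (hy : 2 ≤ y) :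
    ∑ p ∈ Finset.Icc 0 ⌊y⌋₊, (if p.Prime then (p : ℝ) / Real.log p else 0) =
      y / Real.log y ^ 2 * Chebyshev.theta y -
        ∫ t in (2 : ℝ)..y, (1 / Real.log t ^ 2 - 2 / Real.log t ^ 3) * Chebyshev.theta t := by
  set a : ℕ → ℝ := fun n => if n.Prime then Real.log n else 0 with ha
  have hth : ∀ t : ℝ, Chebyshev.theta t = ∑ k ∈ Finset.Icc 0 ⌊t⌋₊, a k := by
    intro t
    rw [Chebyshev.theta_eq_sum_Icc, Finset.sum_filter]
  have h1 := sum_mul_eq_sub_integral_mul₁ a (f := fun t : ℝ => t / Real.log t ^ 2)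
    (by simp [a]) (by simp [a]) y (fun t ht => (Pg_deriv ht.1).differentiableAt) ?_
  · rw [hth, intervalIntegral.integral_of_le hy]
    have e : ∫ t in Set.Ioc 2 y, (1 / Real.log t ^ 2 - 2 / Real.log t ^ 3) * Chebyshev.theta t =
        ∫ t in Set.Ioc 2 y, deriv (fun t : ℝ => t / Real.log t ^ 2) t * ∑ k ∈ Finset.Icc 0 ⌊t⌋₊, a k := by
      refine MeasureTheory.setIntegral_congr_fun measurableSet_Ioc fun t ht => ?_
      rw [(Pg_deriv ht.1.le).deriv, hth]
    rw [e, ← h1]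
    refine Finset.sum_congr rfl fun p _ => ?_
    simp only [a]
    split_ifs with hp
    · have : 0 < Real.log p := Real.log_pos (by exact_mod_cast hp.one_lt)
      field_simp
    · simp
  · refine ContinuousOn.integrableOn_Icc ((Pg_cont y).congr fun t ht => (Pg_deriv ht.1).deriv)

lemma P_sum : ∃ C : ℝ, 0 < C ∧ ∀ y : ℝ, 2 ≤ y →
    |∑ p ∈ Finset.Icc 0 ⌊y⌋₊, (if p.Prime then (p : ℝ) / Real.log p else 0) -
      y ^ 2 / (2 * Real.log y ^ 2)| ≤ C * (y ^ 2 / Real.log y ^ 3) := by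
  obtain ⟨C, hC, hθ⟩ := P_theta_pnt
  refine ⟨C + 8 * 27 + (5 * C + 1) * 343, by positivity, fun y hy => ?_⟩
  have hl := P_log_half hy
  have hl0 : 0 < Real.log y := by linarith
  set J := fun t : ℝ => (1 / Real.log t ^ 2 - 2 / Real.log t ^ 3) * Chebyshev.theta t -
    (t / Real.log t ^ 2 - t / Real.log t ^ 3) with hJ
  have i1 : IntervalIntegrable (fun t : ℝ => (1 / Real.log t ^ 2 - 2 / Real.log t ^ 3) * Chebyshev.theta t)
      MeasureTheory.volume 2 y :=
    (Chebyshev.theta_mono.intervalIntegrable).continuousOn_mul (by rw [Set.uIcc_of_le hy]; exact Pg_cont y)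
  have i2 : IntervalIntegrable (fun t : ℝ => (t / Real.log t ^ 2 - t / Real.log t ^ 3))
      MeasureTheory.volume 2 y :=
    ContinuousOn.intervalIntegrable (by rw [Set.uIcc_of_le hy]; exact PG_cont y)
  have e1 : ∫ t in (2:ℝ)..y, J t = (∫ t in (2:ℝ)..y, (1 / Real.log t ^ 2 - 2 / Real.log t ^ 3) * Chebyshev.theta t)
      - (y ^ 2 / (2 * Real.log y ^ 2) - 2 ^ 2 / (2 * Real.log 2 ^ 2)) := by
    rw [hJ, intervalIntegral.integral_sub i1 i2]
    congr 1
    refine intervalIntegral.integral_eq_sub_of_hasDerivAt (f := fun t : ℝ => t ^ 2 / (2 * Real.log t ^ 2)) (fun t ht => ?_) i2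
    rw [Set.uIcc_of_le hy] at ht
    exact PG_deriv ht.1
  have b1 : |∫ t in (2:ℝ)..y, J t| ≤ (5 * C + 1) * (343 * (y / Real.log y ^ 3)) * |y - 2| := by
    rw [← Real.norm_eq_abs (∫ t in (2:ℝ)..y, J t)]
    refine intervalIntegral.norm_integral_le_of_norm_le_const fun t ht => ?_
    rw [Set.uIoc_of_le hy] at ht
    have ht2 := ht.1.le
    have hlt := P_log_half ht2
    have hlt0 : 0 < Real.log t := by linarith
    have eJ : J t = (1 / Real.log t ^ 2 - 2 / Real.log t ^ 3) * (Chebyshev.theta t - t) -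
        t / Real.log t ^ 3 := by
      rw [hJ]; ring
    have c1 : |1 / Real.log t ^ 2 - 2 / Real.log t ^ 3| ≤ 5 / Real.log t ^ 2 := by
      have p1 : 0 < 1 / Real.log t ^ 2 := by positivity
      have p2 : 0 < 2 / Real.log t ^ 3 := by positivity
      have p3 : 2 / Real.log t ^ 3 ≤ 4 / Real.log t ^ 2 := by
        rw [div_le_div_iff₀ (by positivity) (by positivity)]
        have : 0 < Real.log t ^ 2 := by positivity
        nlinarith
      have p4 : 5 / Real.log t ^ 2 = 1 / Real.log t ^ 2 + 4 / Real.log t ^ 2 := by ring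
      rw [p4, abs_le]
      constructor <;> linarith
    have c2 := hθ t ht2
    have c3 : 0 < t / Real.log t ^ 3 := by positivity
    rw [eJ, Real.norm_eq_abs]
    refine (abs_sub _ _).trans ?_
    rw [abs_mul, abs_of_pos c3]
    calc _ ≤ 5 / Real.log t ^ 2 * (C * (t / Real.log t)) + t / Real.log t ^ 3 := by gcongr
      _ = (5 * C + 1) * (t / Real.log t ^ 3) := by field_simp
      _ ≤ _ := by
        gcongr
        exact P_tlog ht2 ht.2
  have hq : 0 < y ^ 2 / Real.log y ^ 3 := by positivity
  have b1' : |∫ t in (2:ℝ)..y, J t| ≤ (5 * C + 1) * 343 * (y ^ 2 / Real.log y ^ 3) := by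
    refine b1.trans ?_
    rw [abs_of_nonneg (by linarith)]
    calc _ ≤ (5 * C + 1) * (343 * (y / Real.log y ^ 3)) * y := by gcongr; linarith
      _ = _ := by ring
  have b2 : |y / Real.log y ^ 2 * (Chebyshev.theta y - y)| ≤ C * (y ^ 2 / Real.log y ^ 3) := by
    rw [abs_mul, abs_of_pos (by positivity)]
    calc _ ≤ y / Real.log y ^ 2 * (C * (y / Real.log y)) := by gcongr; exact hθ y hy
      _ = _ := by field_simp
  have b3 : (2:ℝ) ^ 2 / (2 * Real.log 2 ^ 2) ≤ 8 * 27 * (y ^ 2 / Real.log y ^ 3) := by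
    have h2 := P_log_half (le_refl (2:ℝ))
    have p1 : (2:ℝ) ^ 2 / (2 * Real.log 2 ^ 2) ≤ 8 := by
      rw [div_le_iff₀ (by positivity)]; nlinarith
    have p2 : 1 ≤ 27 * (y ^ 2 / Real.log y ^ 3) := by
      have hr : Real.log y ≤ 3 * y ^ (1/3 : ℝ) := by
        have := Real.log_le_rpow_div (x := y) (ε := 1/3) (by linarith) (by norm_num)
        linarith
      have hr3 : (y ^ (1/3 : ℝ)) ^ 3 = y := by
        rw [← Real.rpow_natCast, ← Real.rpow_mul (by linarith)]; norm_num
      have : Real.log y ^ 3 ≤ (3 * y ^ (1/3 : ℝ)) ^ 3 := by gcongr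
      rw [mul_pow, hr3] at this
      rw [mul_div_assoc', le_div_iff₀ (by positivity)]
      nlinarith
    linarith
  have b3' : 0 ≤ (2:ℝ) ^ 2 / (2 * Real.log 2 ^ 2) := by positivity
  have key : ∑ p ∈ Finset.Icc 0 ⌊y⌋₊, (if p.Prime then (p : ℝ) / Real.log p else 0) -
      y ^ 2 / (2 * Real.log y ^ 2) = y / Real.log y ^ 2 * (Chebyshev.theta y - y) +
        2 ^ 2 / (2 * Real.log 2 ^ 2) - ∫ t in (2:ℝ)..y, J t := by
    rw [P_abel hy, e1]
    have : y / Real.log y ^ 2 * y - y ^ 2 / (2 * Real.log y ^ 2) = y ^ 2 / (2 * Real.log y ^ 2) := by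
      field_simp; ring
    linear_combination this
  rw [key]
  rw [abs_le] at b1' b2 ⊢
  constructor <;> nlinarith

theorem stmt_11 :
    ∃ C : ℝ, 0 < C ∧ ∀ x : ℝ, 2 ≤ x →
      |(∑ p ∈ (Finset.range (⌊Real.sqrt x⌋₊ + 1)).filter
            (fun p : ℕ => p.Prime ∧ (p : ℝ) ≤ Real.sqrt x),
          (p : ℝ) / Real.log p) - 2 * x / (Real.log x) ^ 2| ≤
        C * (x / (Real.log x) ^ 3) := by
  obtain ⟨C, hC, h⟩ := P_sum
  refine ⟨8 * C + 4, by positivity, fun x hx => ?_⟩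
  have hx0 : 0 < x := by linarith
  have hl : 0 < Real.log x := Real.log_pos (by linarith)
  have hq : 0 < x / Real.log x ^ 3 := by positivity
  have hsum : (∑ p ∈ (Finset.range (⌊Real.sqrt x⌋₊ + 1)).filter
            (fun p : ℕ => p.Prime ∧ (p : ℝ) ≤ Real.sqrt x), (p : ℝ) / Real.log p) =
      ∑ p ∈ Finset.Icc 0 ⌊Real.sqrt x⌋₊, (if p.Prime then (p : ℝ) / Real.log p else 0) := by
    rw [← Finset.sum_filter]
    refine Finset.sum_congr ?_ fun _ _ => rfl
    ext p
    simp only [Finset.mem_filter, Finset.mem_range, Finset.mem_Icc]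
    constructor
    · rintro ⟨h1, h2, h3⟩
      exact ⟨⟨Nat.zero_le _, by omega⟩, h2⟩
    · rintro ⟨h1, h2⟩
      exact ⟨by omega, h2, (Nat.le_floor_iff (Real.sqrt_nonneg x)).mp h1.2⟩
  rw [hsum]
  rcases le_or_gt 2 (Real.sqrt x) with h2 | h2
  · have := h (Real.sqrt x) h2
    rw [Real.sq_sqrt hx0.le, Real.log_sqrt hx0.le] at this
    have e1 : x / (2 * (Real.log x / 2) ^ 2) = 2 * x / Real.log x ^ 2 := by field_simp; try norm_num
    have e2 : x / (Real.log x / 2) ^ 3 = 8 * (x / Real.log x ^ 3) := by field_simp; try norm_num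
    rw [e1, e2] at this
    nlinarith
  · have hz : ∑ p ∈ Finset.Icc 0 ⌊Real.sqrt x⌋₊, (if p.Prime then (p : ℝ) / Real.log p else 0) = 0 := by
      refine Finset.sum_eq_zero fun p hp => ?_
      rw [if_neg]
      intro hpr
      have h3 := hpr.two_le
      have h4 : (p : ℝ) ≤ Real.sqrt x := (Nat.le_floor_iff (Real.sqrt_nonneg x)).mp (Finset.mem_Icc.mp hp).2
      have : (2 : ℝ) ≤ p := by exact_mod_cast h3
      linarith
    rw [hz, zero_sub, abs_neg, abs_of_pos (by positivity)]
    have hl2 : Real.log x ≤ 2 := by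
      have h5 := Real.log_le_sub_one_of_pos (Real.sqrt_pos.mpr hx0)
      rw [Real.log_sqrt hx0.le] at h5
      linarith
    have e : 2 * x / Real.log x ^ 2 = 2 * Real.log x * (x / Real.log x ^ 3) := by field_simp
    rw [e]
    have : 2 * Real.log x ≤ 8 * C + 4 := by linarith
    gcongr
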